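/- arXiv:0903.2785 — 6 statements merged into one kernel-verified Lean document; each statement's English description precedes it below -/
import Mathlib

section
/- Let h ≥ 1 be an integer and let M₁ ≥ M₂ ≥ ⋯ ≥ M_h be real numbers with M_h ≥ 1. Define B_n = C(h,n)·∏_{k=1}^{h−n} M_k for 0 ≤ n ≤ h, set m = ⌊(h+1)/(M_h+1)⌋, and let B = C(h,m)·M_h^{−m}·∏_{k=1}^{h} M_k. Then B_n ≤ B for every 0 ≤ n ≤ h. -/
/-!
Write `x` for the smallest value `M_h`. Each of the `n` factors missing from the product in `B n`
is at least `x`, so `B n ≤ C(h,n) x⁻ⁿ ∏ M_k`. The sequence `C(h,n) x⁻ⁿ` has consecutive ratios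
`(h - n) / ((n + 1) x)`, and such a ratio is at least `1` exactly when
`(n + 1) (x + 1) ≤ h + 1`, i.e. when `n + 1 ≤ m`. The sequence therefore increases up to `n = m`
and decreases afterwards, so its maximum is at `m`.
-/

/-- `C(h,n+1) (n+1) = C(h,n) (h-n)` over `ℝ`; for `n > h` both sides vanish. -/
lemma choose_succ_mul_real (h n : ℕ) :
    (h.choose (n + 1) : ℝ) * (n + 1) = h.choose n * ((h : ℝ) - n) := by
  rcases le_or_gt n h with hn | hn
  · have := Nat.choose_succ_right_eq h n
    rw [← Nat.cast_sub hn]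
    exact_mod_cast this
  · simp [Nat.choose_eq_zero_of_lt hn, Nat.choose_eq_zero_of_lt (Nat.lt_succ_of_lt hn)]

/-- The sequence `C(h,n) x⁻ⁿ` is maximal at `n = ⌊(h+1)/(x+1)⌋`. -/
lemma choose_mul_inv_pow_le (h : ℕ) (x : ℝ) (hx : 0 < x) (n : ℕ) :
    (h.choose n : ℝ) * x⁻¹ ^ n ≤
      h.choose ⌊((h : ℝ) + 1) / (x + 1)⌋₊ * x⁻¹ ^ ⌊((h : ℝ) + 1) / (x + 1)⌋₊ := by
  set m := ⌊((h : ℝ) + 1) / (x + 1)⌋₊ with hm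
  have key : ∀ k : ℕ, k + 1 ≤ m ↔ ((k : ℝ) + 1) * (x + 1) ≤ h + 1 := by
    intro k
    rw [hm, Nat.le_floor_iff (by positivity), le_div_iff₀ (by positivity)]
    push_cast
    rfl
  have step (k : ℕ) : (h.choose k : ℝ) * x⁻¹ ^ k = (h.choose k * x) * x⁻¹ ^ (k + 1) := by
    rw [pow_succ', mul_assoc, mul_inv_cancel_left₀ hx.ne']
  have up : ∀ k, k + 1 ≤ m →
      (h.choose k : ℝ) * x⁻¹ ^ k ≤ h.choose (k + 1) * x⁻¹ ^ (k + 1) := by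
    intro k hk
    rw [key] at hk
    rw [step]
    have hc := choose_succ_mul_real h k
    have h0 : (0 : ℝ) ≤ h.choose k := by positivity
    refine mul_le_mul_of_nonneg_right ?_ (by positivity)
    refine le_of_mul_le_mul_right ?_ (by positivity : (0 : ℝ) < k + 1)
    rw [hc, mul_assoc]
    exact mul_le_mul_of_nonneg_left (by linarith) h0
  have down : ∀ k, m ≤ k →
      (h.choose (k + 1) : ℝ) * x⁻¹ ^ (k + 1) ≤ h.choose k * x⁻¹ ^ k := by
    intro k hk
    have hk' := (not_congr (key k)).mp (by omega)
    rw [step k]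
    have hc := choose_succ_mul_real h k
    have h0 : (0 : ℝ) ≤ h.choose k := by positivity
    refine mul_le_mul_of_nonneg_right ?_ (by positivity)
    refine le_of_mul_le_mul_right ?_ (by positivity : (0 : ℝ) < k + 1)
    rw [hc, mul_assoc]
    exact mul_le_mul_of_nonneg_left (by linarith) h0
  rcases le_total n m with hn | hn
  · induction hn using Nat.decreasingInduction with
    | self => exact le_rfl
    | of_succ k hk ih => exact (up k hk).trans ih
  · induction n, hn using Nat.le_induction with
    | base => exact le_rfl
    | succ k hk ih => exact (down k hk).trans ih

/-- Replacing the last `n` of `h` nonnegative factors by a common lower bound `x`. -/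
lemma prod_filter_mul_pow_le {h : ℕ} (M : Fin h → ℝ) (x : ℝ) (hx : 0 ≤ x) (hM : ∀ k, x ≤ M k)
    {n : ℕ} (hn : n ≤ h) :
    (∏ k ∈ Finset.univ.filter (fun k : Fin h => (k : ℕ) < h - n), M k) * x ^ n ≤ ∏ k, M k := by
  rw [← Finset.prod_filter_mul_prod_filter_not Finset.univ (fun k : Fin h => (k : ℕ) < h - n)]
  refine mul_le_mul_of_nonneg_left ?_ (Finset.prod_nonneg fun k _ => hx.trans (hM k))
  have hcard : (Finset.univ.filter (fun k : Fin h => ¬ (k : ℕ) < h - n)).card = n := by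
    have h1 := Finset.card_filter_add_card_filter_not (s := (Finset.univ : Finset (Fin h)))
      (fun k : Fin h => (k : ℕ) < h - n)
    rw [Fin.card_filter_val_lt, Finset.card_univ, Fintype.card_fin] at h1
    omega
  calc x ^ n = ∏ _k ∈ Finset.univ.filter (fun k : Fin h => ¬ (k : ℕ) < h - n), x := by
        rw [Finset.prod_const, hcard]
    _ ≤ _ := Finset.prod_le_prod (fun _ _ => hx) (fun k _ => hM k)

/-- With M₁ ≥ ⋯ ≥ M_h ≥ 1, B_n = C(h,n)·∏_{k=1}^{h-n} M_k,
m = ⌊(h+1)/(M_h+1)⌋ and B = C(h,m)·M_h^{-m}·∏_{k=1}^{h} M_k, one has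
B_n ≤ B for all 0 ≤ n ≤ h. -/
theorem Bn_le_B
    {h : ℕ} (hh : 1 ≤ h) (M : Fin h → ℝ)
    (hM : ∀ i j : Fin h, i ≤ j → M j ≤ M i)
    (hM1 : 1 ≤ M ⟨h - 1, by omega⟩)
    (B : ℕ → ℝ)
    (hB : ∀ n : ℕ, B n = (h.choose n : ℝ) *
      ∏ k ∈ Finset.univ.filter (fun k : Fin h => (k : ℕ) < h - n), M k)
    (m : ℕ) (hm : m = ⌊((h : ℝ) + 1) / (M ⟨h - 1, by omega⟩ + 1)⌋₊) :
    ∀ n ≤ h, B n ≤ (h.choose m : ℝ) * (M ⟨h - 1, by omega⟩) ^ (-(m : ℤ)) * ∏ k, M k := by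
  intro n hn
  have hlast : ∀ k, M ⟨h - 1, by omega⟩ ≤ M k := fun k =>
    hM _ _ (Fin.le_def.mpr (by have := k.isLt; simp only; omega))
  generalize M ⟨h - 1, by omega⟩ = x at *
  have hx : 0 < x := by linarith
  have hP := prod_filter_mul_pow_le M x hx.le hlast hn
  have hmax := choose_mul_inv_pow_le h x hx n
  rw [← hm] at hmax
  have hnonneg : 0 ≤ ∏ k, M k := Finset.prod_nonneg fun k _ => hx.le.trans (hlast k)
  rw [hB, zpow_neg, zpow_natCast, ← inv_pow]
  refine le_trans ?_ (mul_le_mul_of_nonneg_right hmax hnonneg)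
  rw [mul_assoc]
  refine mul_le_mul_of_nonneg_left ?_ (by positivity)
  rw [inv_pow, ← div_eq_inv_mul, le_div_iff₀ (by positivity)]
  exact hP
end

section
/- Let v ≥ 2 be an integer and let x be the largest prime such that the product of all primes p ≤ x is at most v. Then ∏_{p | v} (p+1)/(p−1) ≤ ∏_{p ≤ x} (p+1)/(p−1), where the left product ranges over the distinct primes dividing v and the right product ranges over all primes p ≤ x. -/
/-!
Among finite sets of primes, an initial segment of the primes has the smallest product for its
size. If `v` had more prime divisors than there are primes up to `x`, then with `q` the prime
following `x`, the product of the primes up to `q` would be at most the product of the prime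
divisors of `v`, hence at most `v`, contradicting the maximality of `x`. So `v` has at most as many
prime divisors as there are primes up to `x`. Since `(p + 1) / (p - 1)` exceeds `1` and decreases
with `p`, the initial segment has the largest product of these ratios among sets of primes of at
most its size. Both comparisons are instances of `prod_le_prod_of_threshold`.
-/

/-- Exchange principle: if `A` has at most as many elements as `B`, and a constant `c ≥ 1`
separates the values of `g` on `A \ B` from those on `B \ A`, then the product over `A` is at most
the product over `B`. -/
lemma prod_le_prod_of_threshold {A B : Finset ℕ} {g : ℕ → ℝ} {c : ℝ} (hc : 1 ≤ c)
    (hcard : A.card ≤ B.card) (hA0 : ∀ a ∈ A, 0 ≤ g a)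
    (hA : ∀ a ∈ A \ B, g a ≤ c) (hB : ∀ b ∈ B \ A, c ≤ g b) :
    ∏ p ∈ A, g p ≤ ∏ p ∈ B, g p := by
  have hdiff : (A \ B).card ≤ (B \ A).card := by
    have h1 := Finset.card_sdiff_add_card_inter A B
    have h2 := Finset.card_sdiff_add_card_inter B A
    rw [Finset.inter_comm B A] at h2
    omega
  have key : ∏ p ∈ A \ B, g p ≤ ∏ p ∈ B \ A, g p :=
    calc ∏ p ∈ A \ B, g p ≤ ∏ _p ∈ A \ B, c :=
          Finset.prod_le_prod (fun a ha => hA0 a (Finset.mem_sdiff.1 ha).1) hA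
      _ = c ^ (A \ B).card := Finset.prod_const c
      _ ≤ c ^ (B \ A).card := pow_le_pow_right₀ hc hdiff
      _ = ∏ _p ∈ B \ A, c := (Finset.prod_const c).symm
      _ ≤ ∏ p ∈ B \ A, g p := Finset.prod_le_prod (fun _ _ => by linarith) hB
  rw [← Finset.prod_inter_mul_prod_sdiff A B, ← Finset.prod_inter_mul_prod_sdiff B A,
    Finset.inter_comm B A]
  exact mul_le_mul_of_nonneg_left key
    (Finset.prod_nonneg fun a ha => hA0 a (Finset.mem_inter.1 ha).1)

lemma ratio_antitone {a b : ℕ} (ha : 2 ≤ a) (hab : a ≤ b) :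
    ((b : ℝ) + 1) / ((b : ℝ) - 1) ≤ ((a : ℝ) + 1) / ((a : ℝ) - 1) := by
  have h1 : (2 : ℝ) ≤ a := by exact_mod_cast ha
  have h2 : (a : ℝ) ≤ b := by exact_mod_cast hab
  rw [div_le_div_iff₀ (by linarith) (by linarith)]
  nlinarith

lemma one_le_ratio {a : ℕ} (ha : 2 ≤ a) : 1 ≤ ((a : ℝ) + 1) / ((a : ℝ) - 1) := by
  have h1 : (2 : ℝ) ≤ a := by exact_mod_cast ha
  rw [le_div_iff₀ (by linarith)]
  linarith

/-- A number smaller than every primorial taken beyond `x` has at most as many prime divisors as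
there are primes up to `x`: otherwise the product of its prime divisors would be at least the
primorial of the prime following `x`. -/
lemma card_primeFactors_le_of_lt_primorial {v x : ℕ} (hv : 2 ≤ v)
    (hmax : ∀ q : ℕ, q.Prime → x < q →
      v < ∏ p ∈ Finset.filter Nat.Prime (Finset.range (q + 1)), p) :
    v.primeFactors.card ≤ (Finset.filter Nat.Prime (Finset.range (x + 1))).card := by
  by_contra! hlt
  have hex : ∃ q : ℕ, q.Prime ∧ x < q := by
    obtain ⟨q, hq, hp⟩ := Nat.exists_infinite_primes (x + 1)
    exact ⟨q, hp, hq⟩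
  obtain ⟨q, ⟨hqp, hxq⟩, hmin⟩ : ∃ q : ℕ, (q.Prime ∧ x < q) ∧
      ∀ p : ℕ, p.Prime → x < p → q ≤ p :=
    ⟨Nat.find hex, Nat.find_spec hex, fun p hp hx => Nat.find_min' hex ⟨hp, hx⟩⟩
  have hsub : Finset.filter Nat.Prime (Finset.range (q + 1)) ⊆
      insert q (Finset.filter Nat.Prime (Finset.range (x + 1))) := by
    intro p hp
    simp only [Finset.mem_insert, Finset.mem_filter, Finset.mem_range] at hp ⊢
    rcases Nat.lt_or_ge x p with h | h
    · have := hmin p hp.2 h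
      left; omega
    · exact Or.inr ⟨by omega, hp.2⟩
  have hcard := (Finset.card_le_card hsub).trans (Finset.card_insert_le _ _)
  have hprod : ∏ p ∈ Finset.filter Nat.Prime (Finset.range (q + 1)), (p : ℝ) ≤
      ∏ p ∈ v.primeFactors, (p : ℝ) := by
    refine prod_le_prod_of_threshold (c := (q : ℝ)) (by exact_mod_cast hqp.one_le)
      (by omega) (fun _ _ => by positivity) ?_ ?_
    · intro a ha
      simp only [Finset.mem_sdiff, Finset.mem_filter, Finset.mem_range] at ha
      have : a ≤ q := by omega
      exact_mod_cast this
    · intro b hb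
      obtain ⟨hbv, hbq⟩ := Finset.mem_sdiff.1 hb
      have hbp := Nat.prime_of_mem_primeFactors hbv
      simp only [Finset.mem_filter, Finset.mem_range, hbp, and_true] at hbq
      have : q ≤ b := by omega
      exact_mod_cast this
  have hprod' : ∏ p ∈ Finset.filter Nat.Prime (Finset.range (q + 1)), p ≤
      ∏ p ∈ v.primeFactors, p := by
    rw [← Nat.cast_prod, ← Nat.cast_prod] at hprod
    exact Nat.cast_le.1 hprod
  have hdvd := Nat.le_of_dvd (by omega) (Nat.prod_primeFactors_dvd v)
  have := hmax q hqp hxq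
  omega

/-- Let v ≥ 2 and let x be the largest prime whose primorial ∏_{p ≤ x} p is
at most v.  Then ∏_{p ∣ v} (p+1)/(p−1) ≤ ∏_{p ≤ x} (p+1)/(p−1). -/
theorem prod_prime_divisors_ratio_le
    (v : ℕ) (hv : 2 ≤ v) (x : ℕ) (hx : x.Prime)
    (hle : ∏ p ∈ Finset.filter Nat.Prime (Finset.range (x + 1)), p ≤ v)
    (hmax : ∀ q : ℕ, q.Prime → x < q →
      v < ∏ p ∈ Finset.filter Nat.Prime (Finset.range (q + 1)), p) :
    ∏ p ∈ v.primeFactors, (((p : ℝ) + 1) / ((p : ℝ) - 1)) ≤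
      ∏ p ∈ Finset.filter Nat.Prime (Finset.range (x + 1)),
        (((p : ℝ) + 1) / ((p : ℝ) - 1)) := by
  refine prod_le_prod_of_threshold (one_le_ratio hx.two_le)
    (card_primeFactors_le_of_lt_primorial hv hmax) ?_ ?_ ?_
  · intro a ha
    have := one_le_ratio (Nat.prime_of_mem_primeFactors ha).two_le
    linarith
  · intro a ha
    obtain ⟨hav, hax⟩ := Finset.mem_sdiff.1 ha
    have hap := Nat.prime_of_mem_primeFactors hav
    simp only [Finset.mem_filter, Finset.mem_range, hap, and_true] at hax
    exact ratio_antitone hx.two_le (by omega)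
  · intro b hb
    simp only [Finset.mem_sdiff, Finset.mem_filter, Finset.mem_range] at hb
    exact ratio_antitone hb.1.2.two_le (by omega)
end

section
/- For every real number x ≥ 41, ∏_{p ≤ x} (p+1)/(p−1) < 9.189·(log x)², where the product ranges over the primes p ≤ x and log denotes the natural logarithm. Equivalently, ∑_{p ≤ x} log((p+1)/(p−1)) < 2·log log x + 2.218 for x ≥ 41. -/
/-!
The inequality follows from an explicit one-sided form of Mertens' theorems; the constant `2.218`
is far above the true limit `2γ + log (6/π²) ≈ 0.657`, so crude bounds suffice.

Write `P n` for the primes up to `n`, `A n = ∑_{p ≤ n} (log p)/p` and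
`S n = ∑_{p ≤ n} log ((p+1)/(p-1))`. Since `∏_{p ≤ n} p ^ ⌊n/p⌋` divides `n!`, one has
`n * A n ≤ log n! + θ(n)`, and Chebyshev's bound `θ(n) ≤ n log 4` together with
`log n! ≤ n log n - n + log n + 1` gives `A n ≤ log n + E` for `n ≥ 41`, with the explicit
constant `E` called `mertensE` below.

Partial summation is carried out through a monotone quantity: using
`log ((p+1)/(p-1)) ≤ 2/p + (1/(p-1) - 1/p)`, the function
`F n = S n - 2 (A n - E) / log n - 2 log log n + 1/n`
is nonincreasing for `n ≥ 41`, because its increment is at most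
`2 (1 - u + log u) ≤ 0` with `u = log n / log (n+1)`. Hence
`S n ≤ 2 log log n + 2 + F 41`, and `F 41 < 0.218` is a finite computation.
-/

/-- The primes up to `n`. -/
def primesTo (n : ℕ) : Finset ℕ := Finset.filter Nat.Prime (Finset.Iic n)

/-- Mertens' sum `∑_{p ≤ n} (log p) / p`. -/
noncomputable def mertensA (n : ℕ) : ℝ := ∑ p ∈ primesTo n, Real.log p / p

/-- The logarithm of the product in question, at an integer. -/
noncomputable def ratioS (n : ℕ) : ℝ :=
  ∑ p ∈ primesTo n, Real.log (((p : ℝ) + 1) / ((p : ℝ) - 1))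

/-- An admissible constant in `∑_{p ≤ n} (log p) / p ≤ log n + E` for `n ≥ 41`. -/
noncomputable def mertensE : ℝ := Real.log 4 - 1 + (1 + Real.log 41) / 41

/-- The function made monotone by partial summation. -/
noncomputable def ratioF (n : ℕ) : ℝ :=
  ratioS n - 2 * (mertensA n - mertensE) / Real.log n - 2 * Real.log (Real.log n) + 1 / n

lemma sum_primesTo_succ (f : ℕ → ℝ) (n : ℕ) :
    ∑ p ∈ primesTo (n + 1), f p =
      ∑ p ∈ primesTo n, f p + if (n + 1).Prime then f (n + 1) else 0 := by
  have h : Finset.Iic (n + 1) = insert (n + 1) (Finset.Iic n) := by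
    ext k; simp only [Finset.mem_Iic, Finset.mem_insert]; omega
  unfold primesTo
  rw [h, Finset.filter_insert]
  split_ifs with hp
  · rw [Finset.sum_insert (by simp)]; ring
  · simp

lemma log_factorial_le (n : ℕ) (hn : 1 ≤ n) :
    Real.log (n.factorial) ≤ n * Real.log n - n + Real.log n + 1 := by
  induction n, hn using Nat.le_induction with
  | base => simp
  | succ n hn ih =>
    have hn0 : (0 : ℝ) < n := by exact_mod_cast hn
    rw [Nat.factorial_succ, Nat.cast_mul, Real.log_mul (by positivity) (by positivity)]
    push_cast
    -- `log (1 + 1/n) ≥ 1/(n+1)`, from `log u ≤ u - 1` at `u = n/(n+1)`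
    have h1 : Real.log n - Real.log (n + 1) ≤ (n : ℝ) / (n + 1) - 1 := by
      rw [← Real.log_div (by positivity) (by positivity)]
      exact Real.log_le_sub_one_of_pos (by positivity)
    have h2 : ((n : ℝ) + 1) * (Real.log n - Real.log (n + 1)) ≤ -1 := by
      have := mul_le_mul_of_nonneg_left h1 (by positivity : (0 : ℝ) ≤ n + 1)
      have e : ((n : ℝ) + 1) * ((n : ℝ) / (n + 1) - 1) = -1 := by field_simp; ring
      linarith
    nlinarith

lemma prod_pow_dvd_factorial (n : ℕ) : ∏ p ∈ primesTo n, p ^ (n / p) ∣ n.factorial := by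
  apply Finset.prod_dvd_of_isRelPrime
  · intro p hp q hq hpq
    simp only [primesTo, Finset.coe_filter, Set.mem_ofPred_eq] at hp hq
    exact Nat.coprime_iff_isRelPrime.1
      (Nat.Coprime.pow _ _ ((Nat.coprime_primes hp.2 hq.2).2 hpq))
  · intro p hp
    simp only [primesTo, Finset.mem_filter] at hp
    have h1 : p.factorial ^ (n / p) ∣ (∑ _i ∈ Finset.range (n / p), p).factorial := by
      simpa using Nat.prod_factorial_dvd_factorial_sum (Finset.range (n / p)) (fun _ => p)
    have h2 : (∑ _i ∈ Finset.range (n / p), p) ≤ n := by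
      simpa using Nat.div_mul_le_self n p
    exact ((pow_dvd_pow_of_dvd (Nat.dvd_factorial hp.2.pos le_rfl) _).trans h1).trans
      (Nat.factorial_dvd_factorial h2)

/-- Mertens' argument: the primes in `n!` are counted with multiplicity at least `⌊n/p⌋`, and
replacing `⌊n/p⌋` by `n/p` costs at most `∑_{p ≤ n} log p`. -/
lemma mul_mertensA_le (n : ℕ) :
    n * mertensA n ≤ Real.log n.factorial + n * Real.log 4 := by
  have hpos : ∀ p ∈ primesTo n, 0 < p := fun p hp => (Finset.mem_filter.1 hp).2.pos
  have h1 : ∑ p ∈ primesTo n, ((n / p : ℕ) : ℝ) * Real.log p ≤ Real.log n.factorial := by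
    have h := Nat.le_of_dvd n.factorial_pos (prod_pow_dvd_factorial n)
    have h' : ((∏ p ∈ primesTo n, p ^ (n / p) : ℕ) : ℝ) ≤ n.factorial := by exact_mod_cast h
    have hp0 : (0 : ℝ) < ((∏ p ∈ primesTo n, p ^ (n / p) : ℕ) : ℝ) := by
      exact_mod_cast Finset.prod_pos fun p hp => pow_pos (hpos p hp) _
    have h2 := Real.log_le_log hp0 h'
    rw [Nat.cast_prod, Real.log_prod] at h2
    · simpa [Real.log_pow] using h2
    · intro p hp
      have := hpos p hp
      positivity
  have h2 : ∑ p ∈ primesTo n, Real.log p ≤ n * Real.log 4 := by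
    have h := Chebyshev.theta_le_log4_mul_x (Nat.cast_nonneg (α := ℝ) n)
    rw [Chebyshev.theta_eq_sum_Icc, Nat.floor_natCast] at h
    have e : Finset.Icc 0 n = Finset.Iic n := by ext k; simp
    rw [e] at h
    unfold primesTo
    linarith
  have h3 : n * mertensA n ≤
      ∑ p ∈ primesTo n, (((n / p : ℕ) : ℝ) * Real.log p + Real.log p) := by
    unfold mertensA
    rw [Finset.mul_sum]
    refine Finset.sum_le_sum fun p hp => ?_
    have hp0 : (0 : ℝ) < p := by exact_mod_cast hpos p hp
    have h4 : (n : ℝ) / p ≤ ((n / p : ℕ) : ℝ) + 1 := by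
      rw [← Nat.floor_div_eq_div (K := ℝ)]
      exact (Nat.lt_floor_add_one _).le
    have h5 := mul_le_mul_of_nonneg_right h4 (Real.log_natCast_nonneg p)
    calc (n : ℝ) * (Real.log p / p) = n / p * Real.log p := by ring
      _ ≤ _ := by linarith
  rw [Finset.sum_add_distrib] at h3
  linarith

lemma mertensA_le (n : ℕ) (hn : 41 ≤ n) : mertensA n ≤ Real.log n + mertensE := by
  have hn' : (41 : ℝ) ≤ n := by exact_mod_cast hn
  have h1 := mul_mertensA_le n
  have h2 := log_factorial_le n (by omega)
  -- the tangent line of `log` at `41`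
  have h3 : Real.log n ≤ Real.log 41 + (n / 41 - 1) := by
    have := Real.log_le_sub_one_of_pos (by positivity : (0 : ℝ) < n / 41)
    rw [Real.log_div (by positivity) (by norm_num)] at this
    linarith
  have h4 : 0 ≤ Real.log 41 := Real.log_nonneg (by norm_num)
  have h5 : Real.log 41 * 41 ≤ Real.log 41 * n := mul_le_mul_of_nonneg_left hn' h4
  have h6 : (n : ℝ) * mertensA n ≤ n * (Real.log n + mertensE) := by
    unfold mertensE
    nlinarith
  exact le_of_mul_le_mul_left h6 (by linarith)

lemma ratioF_succ_le (n : ℕ) (hn : 41 ≤ n) : ratioF (n + 1) ≤ ratioF n := by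
  have hn' : (41 : ℝ) ≤ n := by exact_mod_cast hn
  have hA := mertensA_le n hn
  have hL : 0 < Real.log n := Real.log_pos (by linarith)
  have hLL : Real.log n ≤ Real.log (n + 1) := Real.log_le_log (by linarith) (by linarith)
  have hL' : 0 < Real.log (n + 1 : ℝ) := hL.trans_le hLL
  have hS : ratioS (n + 1) - 2 * mertensA (n + 1) / Real.log (n + 1) ≤
      ratioS n - 2 * mertensA n / Real.log (n + 1) + (1 / n - 1 / (n + 1)) := by
    have hd : (0 : ℝ) ≤ 1 / n - 1 / (n + 1) := by
      rw [sub_nonneg]; exact one_div_le_one_div_of_le (by linarith) (by linarith)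
    unfold ratioS mertensA
    rw [sum_primesTo_succ, sum_primesTo_succ]
    split_ifs with hp
    · push_cast
      have e : ((n : ℝ) + 1 + 1) / (n + 1 - 1) = (1 + 1 / (n + 1)) * (1 + 1 / n) := by
        have : (n : ℝ) ≠ 0 := by positivity
        rw [add_sub_cancel_right]
        field_simp
      have l1 := Real.log_le_sub_one_of_pos (by positivity : (0 : ℝ) < 1 + 1 / (n + 1))
      have l2 := Real.log_le_sub_one_of_pos (by positivity : (0 : ℝ) < 1 + 1 / n)
      rw [e, Real.log_mul (by positivity) (by positivity)]
      have e2 : 2 * (∑ p ∈ primesTo n, Real.log p / p + Real.log ((n : ℝ) + 1) / (n + 1)) /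
          Real.log (n + 1) = 2 * (∑ p ∈ primesTo n, Real.log p / p) / Real.log (n + 1)
            + 2 * (1 / (n + 1)) := by
        field_simp
      rw [e2]
      linarith
    · simp only [add_zero]
      linarith
  have hlog : Real.log (Real.log n) - Real.log (Real.log (n + 1)) ≤
      Real.log n / Real.log (n + 1) - 1 := by
    rw [← Real.log_div hL.ne' hL'.ne']
    exact Real.log_le_sub_one_of_pos (by positivity)
  have hinv : 0 ≤ 1 / Real.log n - 1 / Real.log (n + 1) := by
    rw [sub_nonneg]; exact one_div_le_one_div_of_le hL hLL
  have hm : (mertensA n - mertensE) * (1 / Real.log n - 1 / Real.log (n + 1)) ≤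
      1 - Real.log n / Real.log (n + 1) := by
    calc _ ≤ Real.log n * (1 / Real.log n - 1 / Real.log (n + 1)) :=
          mul_le_mul_of_nonneg_right (by linarith) hinv
      _ = _ := by field_simp
  unfold ratioF
  push_cast
  have e1 : 2 * (mertensA (n + 1) - mertensE) / Real.log (n + 1) =
    2 * mertensA (n + 1) / Real.log (n + 1) - 2 * mertensE / Real.log (n + 1) := by ring
  have e2 : 2 * (mertensA n - mertensE) / Real.log n =
    2 * ((mertensA n - mertensE) * (1 / Real.log n - 1 / Real.log (n + 1)))
      + 2 * mertensA n / Real.log (n + 1) - 2 * mertensE / Real.log (n + 1) := by ring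
  rw [e1, e2]
  linarith

lemma primesTo_41 : primesTo 41 = {2, 3, 5, 7, 11, 13, 17, 19, 23, 29, 31, 37, 41} := by
  decide +kernel

lemma ratioS_41 : ratioS 41 = Real.log (1596 / 55) := by
  unfold ratioS
  rw [← Real.log_prod, primesTo_41]
  · norm_num
  · intro p hp
    have : (2 : ℝ) ≤ p := by exact_mod_cast (Finset.mem_filter.1 hp).2.two_le
    have : (0 : ℝ) < (p + 1) / (p - 1) := div_pos (by linarith) (by linarith)
    exact this.ne'

/-- The logarithm of a `{2, 3, 5}`-smooth rational. -/
lemma log_smooth (a b c : ℤ) :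
    Real.log ((2 : ℝ) ^ a * 3 ^ b * 5 ^ c) =
      a * Real.log 2 + b * Real.log 3 + c * Real.log 5 := by
  rw [Real.log_mul (by positivity) (by positivity), Real.log_mul (by positivity) (by positivity),
    Real.log_zpow, Real.log_zpow, Real.log_zpow]

lemma mertensA_41 : 1.72 ≤ mertensA 41 := by
  have h2 := Real.log_two_gt_d9
  have h3 := Real.log_three_gt_d9
  have h5 := Real.log_five_gt_d9
  -- `48 < 7²`, `120 < 11²` and `162 < 13²` bound the next logarithms from below
  have h7 : 4 * Real.log 2 + Real.log 3 ≤ 2 * Real.log 7 := by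
    have h := log_smooth 4 1 0
    have := Real.log_le_log (by norm_num)
      (by norm_num : (2 : ℝ) ^ (4 : ℤ) * 3 ^ (1 : ℤ) * 5 ^ (0 : ℤ) ≤ 7 ^ 2)
    rw [h, Real.log_pow] at this
    norm_num at this
    exact this
  have h11 : 3 * Real.log 2 + Real.log 3 + Real.log 5 ≤ 2 * Real.log 11 := by
    have h := log_smooth 3 1 1
    have := Real.log_le_log (by norm_num)
      (by norm_num : (2 : ℝ) ^ (3 : ℤ) * 3 ^ (1 : ℤ) * 5 ^ (1 : ℤ) ≤ 11 ^ 2)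
    rw [h, Real.log_pow] at this
    norm_num at this
    exact this
  have h13 : Real.log 2 + 4 * Real.log 3 ≤ 2 * Real.log 13 := by
    have h := log_smooth 1 4 0
    have := Real.log_le_log (by norm_num)
      (by norm_num : (2 : ℝ) ^ (1 : ℤ) * 3 ^ (4 : ℤ) * 5 ^ (0 : ℤ) ≤ 13 ^ 2)
    rw [h, Real.log_pow] at this
    norm_num at this
    exact this
  have hsub : ({2, 3, 5, 7, 11, 13} : Finset ℕ) ⊆ primesTo 41 := by
    rw [primesTo_41]; decide
  have h := Finset.sum_le_sum_of_subset_of_nonneg (f := fun p : ℕ => Real.log p / p) hsub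
    (fun p _ _ => div_nonneg (Real.log_natCast_nonneg p) (Nat.cast_nonneg p))
  have e : ∑ p ∈ ({2, 3, 5, 7, 11, 13} : Finset ℕ), Real.log p / (p : ℝ) =
      Real.log 2 / 2 + (Real.log 3 / 3 + (Real.log 5 / 5 + (Real.log 7 / 7 +
        (Real.log 11 / 11 + Real.log 13 / 13)))) := by
    simp
  unfold mertensA
  refine le_trans ?_ h
  rw [e]
  linarith

lemma ratioF_41 : ratioF 41 < 0.218 := by
  have h2 := Real.log_two_gt_d9
  have h3 := Real.log_three_gt_d9
  have h5 := Real.log_five_gt_d9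
  have h2' := Real.log_two_lt_d9
  have h3' := Real.log_three_lt_d9
  have h5' := Real.log_five_lt_d9
  have hA := mertensA_41
  -- `1620 < 41² < 1728`
  have hl : 2 * Real.log 2 + 4 * Real.log 3 + Real.log 5 ≤ 2 * Real.log 41 := by
    have h := log_smooth 2 4 1
    have := Real.log_le_log (by norm_num)
      (by norm_num : (2 : ℝ) ^ (2 : ℤ) * 3 ^ (4 : ℤ) * 5 ^ (1 : ℤ) ≤ 41 ^ 2)
    rw [h, Real.log_pow] at this
    norm_num at this
    exact this
  have hu : 2 * Real.log 41 ≤ 6 * Real.log 2 + 3 * Real.log 3 := by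
    have h := log_smooth 6 3 0
    have := Real.log_le_log (by norm_num)
      (by norm_num : (41 : ℝ) ^ 2 ≤ (2 : ℝ) ^ (6 : ℤ) * 3 ^ (3 : ℤ) * 5 ^ (0 : ℤ))
    rw [h, Real.log_pow] at this
    norm_num at this
    exact this
  have hS : ratioS 41 ≤ 6 * Real.log 3 - 2 * Real.log 5 := by
    rw [ratioS_41]
    have h := log_smooth 0 6 (-2)
    have := Real.log_le_log (by norm_num)
      (by norm_num : (1596 / 55 : ℝ) ≤ (2 : ℝ) ^ (0 : ℤ) * 3 ^ (6 : ℤ) * 5 ^ (-2 : ℤ))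
    rw [h] at this
    norm_num at this
    linarith
  -- `log 41 > 18/5`
  have hll : Real.log 2 + 2 * Real.log 3 - Real.log 5 ≤ Real.log (Real.log 41) := by
    have h := log_smooth 1 2 (-1)
    have := Real.log_le_log (by norm_num)
      (show (2 : ℝ) ^ (1 : ℤ) * 3 ^ (2 : ℤ) * 5 ^ (-1 : ℤ) ≤ Real.log 41 by
      norm_num; linarith)
    rw [h] at this
    norm_num at this
    linarith
  have hE : mertensE ≤ 0.502 := by
    have h4 : Real.log 4 = 2 * Real.log 2 := by
      rw [show (4 : ℝ) = 2 ^ 2 by norm_num, Real.log_pow]; norm_num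
    unfold mertensE
    rw [h4]
    linarith
  have hq : 0.65 ≤ 2 * (mertensA 41 - mertensE) / Real.log 41 := by
    rw [le_div_iff₀ (by linarith)]
    linarith
  unfold ratioF
  push_cast
  linarith

lemma ratioS_lt (n : ℕ) (hn : 41 ≤ n) :
    ratioS n < 2 * Real.log (Real.log n) + 2.218 := by
  have hF : ratioF n ≤ ratioF 41 := by
    induction n, hn using Nat.le_induction with
    | base => exact le_rfl
    | succ n hn ih => exact (ratioF_succ_le n hn).trans ih
  have hn' : (41 : ℝ) ≤ n := by exact_mod_cast hn
  have hL : 0 < Real.log n := Real.log_pos (by linarith)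
  have hA : 2 * (mertensA n - mertensE) / Real.log n ≤ 2 := by
    rw [div_le_iff₀ hL]
    linarith [mertensA_le n hn]
  have h0 : (0 : ℝ) ≤ 1 / n := by positivity
  have h41 := ratioF_41
  unfold ratioF at hF h41
  linarith

/-- The additive constant `2.218` is below `log 9.189`. -/
lemma exp_const_le : Real.exp 2.218 ≤ 9.189 := by
  -- `2.218 = 2 + 0.218`
  have h1 : Real.exp 2.218 = Real.exp 1 ^ 2 * Real.exp 0.218 := by
    rw [← Real.exp_nat_mul, ← Real.exp_add]; norm_num
  have h2 : Real.exp 0.218 ≤ 1.24359 := by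
    have := Real.exp_bound' (x := 0.218) (by norm_num) (by norm_num) (n := 6) (by norm_num)
    refine this.trans ?_
    norm_num [Finset.sum_range_succ, Nat.factorial]
  have h3 := Real.exp_one_lt_d9
  rw [h1]
  calc Real.exp 1 ^ 2 * Real.exp 0.218 ≤ 2.7182818286 ^ 2 * 1.24359 := by gcongr
    _ ≤ 9.189 := by norm_num


/-- For every real x ≥ 41, ∏_{p ≤ x} (p+1)/(p−1) < 9.189·(log x)²;
equivalently ∑_{p ≤ x} log((p+1)/(p−1)) < 2·log log x + 2.218. -/
theorem prod_ratio_lt_of_ge_41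
    (x : ℝ) (hx : 41 ≤ x) :
    (∏ p ∈ Finset.filter Nat.Prime (Finset.Iic ⌊x⌋₊),
        (((p : ℝ) + 1) / ((p : ℝ) - 1))) < 9.189 * (Real.log x) ^ 2 ∧
    (∑ p ∈ Finset.filter Nat.Prime (Finset.Iic ⌊x⌋₊),
        Real.log (((p : ℝ) + 1) / ((p : ℝ) - 1))) <
      2 * Real.log (Real.log x) + 2.218 := by
  have hn : 41 ≤ ⌊x⌋₊ := Nat.le_floor (by exact_mod_cast hx)
  have hfl : (⌊x⌋₊ : ℝ) ≤ x := Nat.floor_le (by linarith)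
  have hn' : (41 : ℝ) ≤ (⌊x⌋₊ : ℝ) := by exact_mod_cast hn
  have hL : 0 < Real.log (⌊x⌋₊ : ℝ) := Real.log_pos (by linarith)
  have hLx : Real.log (⌊x⌋₊ : ℝ) ≤ Real.log x := Real.log_le_log (by linarith) hfl
  have hLL := Real.log_le_log hL hLx
  have hS := ratioS_lt ⌊x⌋₊ hn
  unfold ratioS primesTo at hS
  have hsum := hS.trans_le (by linarith : _ ≤ 2 * Real.log (Real.log x) + 2.218)
  refine ⟨?_, hsum⟩
  have hpos : ∀ p ∈ Finset.filter Nat.Prime (Finset.Iic ⌊x⌋₊),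
      (0 : ℝ) < ((p : ℝ) + 1) / ((p : ℝ) - 1) := by
    intro p hp
    have : (2 : ℝ) ≤ p := by exact_mod_cast (Finset.mem_filter.1 hp).2.two_le
    exact div_pos (by linarith) (by linarith)
  rw [← Real.log_prod (fun p hp => (hpos p hp).ne')] at hsum
  have hexp := (Real.log_lt_iff_lt_exp (Finset.prod_pos hpos)).1 hsum
  refine hexp.trans_le ?_
  have hx0 : 0 < Real.log x := hL.trans_le hLx
  have e : Real.exp (2 * Real.log (Real.log x)) = Real.log x ^ 2 := by
    rw [mul_comm, Real.exp_mul, Real.exp_log hx0]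
    norm_num
  rw [Real.exp_add, e, mul_comm]
  gcongr
  exact exp_const_le
end

section
/- Let D be a negative integer with D < −4 and D ≡ 0 or 1 (mod 4), and let p > 3 be a prime. If t, v, t′, v′ are positive integers satisfying 4p = t² − v²·D = t′² − v′²·D, then t = t′ and v = v′. In other words, for each prime p > 3 of the form 4p = t² − v²D, the positive integers t = t(p) and v = v(p) are uniquely determined by p. -/
/-!
Multiplying the two representations `4p = t² - v²D = t'² - v'²D` gives
`16p² = (tt' ± vv'D)² - D(tv' ± t'v)²`, while eliminating `D` gives
`(tv' - t'v)(tv' + t'v) = 4p(v'² - v²)`, so `p` divides `tv' - t'v` or `tv' + t'v`.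
Both of these integers are even, because `t ≡ vD` and `t' ≡ v'D` modulo `2`; as `p` is odd, the one
divisible by `p` is divisible by `2p`. Since `-D > 4`, a nonzero multiple `x` of `2p` has
`-Dx² > 16p²`, so the integer in question vanishes. Then `v'² = v²`, and the equality of
the positive integers `v, v'` and `t, t'` follows.
-/

/-- A multiple `x` of the odd prime `p` that is even and satisfies `-Dx² ≤ 16p²` with `-D > 4`
is zero, since otherwise `|x| ≥ 2p`. -/
lemma eq_zero_of_even_of_prime_dvd {D x : ℤ} {p : ℕ} (hD : D < -4) (hp : p.Prime) (hp3 : 3 < p)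
    (h2 : (2 : ℤ) ∣ x) (hpx : (p : ℤ) ∣ x) (hx : -D * x ^ 2 ≤ 16 * (p : ℤ) ^ 2) : x = 0 := by
  have hcop : IsCoprime (2 : ℤ) (p : ℤ) := by
    have : Nat.Coprime 2 p := (Nat.coprime_primes Nat.prime_two hp).2 (by omega)
    exact_mod_cast Nat.isCoprime_iff_coprime.2 this
  obtain ⟨k, rfl⟩ := hcop.mul_dvd h2 hpx
  have hp0 : (0 : ℤ) < (p : ℤ) ^ 2 := by have := hp.pos; positivity
  by_cases hk : k = 0
  · simp [hk]
  have hk1 : 1 ≤ k ^ 2 := by have : 0 < k ^ 2 := by positivity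
                             omega
  have : -D * k ^ 2 ≤ 4 := by
    by_contra! h
    nlinarith
  nlinarith

/-- Congruence modulo `2` between the two coordinates of a representation of `4p`. -/
lemma even_sub_mul_of_eq {D t v n : ℤ} (h : 4 * n = t ^ 2 - v ^ 2 * D) : Even (t - v * D) := by
  have : Even (t ^ 2 - v ^ 2 * D) := ⟨2 * n, by linarith⟩
  simp only [Int.even_sub, Int.even_mul, Int.even_pow] at this ⊢
  tauto

/-- For a quadratic discriminant D < −4 and a prime p > 3 with
4p = t² − v²D for positive integers t, v, the integers t = t(p) and
v = v(p) are uniquely determined by p. -/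
theorem trace_and_v_unique
    (D : ℤ) (hD : D < -4) (hD4 : D % 4 = 0 ∨ D % 4 = 1)
    (p : ℕ) (hp : p.Prime) (hp3 : 3 < p)
    (t v t' v' : ℤ) (ht : 0 < t) (hv : 0 < v) (ht' : 0 < t') (hv' : 0 < v')
    (h1 : 4 * (p : ℤ) = t ^ 2 - v ^ 2 * D)
    (h2 : 4 * (p : ℤ) = t' ^ 2 - v' ^ 2 * D) :
    t = t' ∧ v = v' := by
  obtain ⟨a, ha⟩ := even_sub_mul_of_eq h1
  obtain ⟨b, hb⟩ := even_sub_mul_of_eq h2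
  have hta : t = v * D + 2 * a := by linarith
  have htb : t' = v' * D + 2 * b := by linarith
  have heven_sub : (2 : ℤ) ∣ t * v' - t' * v := ⟨a * v' - b * v, by rw [hta, htb]; ring⟩
  have heven_add : (2 : ℤ) ∣ t * v' + t' * v :=
    ⟨v * v' * D + a * v' + b * v, by rw [hta, htb]; ring⟩
  have hprod : (t * v' - t' * v) * (t * v' + t' * v) = 4 * p * (v' ^ 2 - v ^ 2) := by
    linear_combination (-v' ^ 2) * h1 + v ^ 2 * h2
  have hnorm_sub : 16 * (p : ℤ) ^ 2 = (t * t' - v * v' * D) ^ 2 + -D * (t * v' - t' * v) ^ 2 := by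
    linear_combination (4 * (p : ℤ)) * h1 + (t ^ 2 - v ^ 2 * D) * h2
  have hnorm_add : 16 * (p : ℤ) ^ 2 = (t * t' + v * v' * D) ^ 2 + -D * (t * v' + t' * v) ^ 2 := by
    linear_combination (4 * (p : ℤ)) * h1 + (t ^ 2 - v ^ 2 * D) * h2
  have hdvd : (p : ℤ) ∣ (t * v' - t' * v) * (t * v' + t' * v) :=
    ⟨4 * (v' ^ 2 - v ^ 2), by rw [hprod]; ring⟩
  have hzero : (t * v' - t' * v) * (t * v' + t' * v) = 0 := by
    rcases (Nat.prime_iff_prime_int.1 hp).dvd_or_dvd hdvd with h | h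
    · rw [eq_zero_of_even_of_prime_dvd hD hp hp3 heven_sub h
        (by nlinarith [sq_nonneg (t * t' - v * v' * D)]), zero_mul]
    · rw [eq_zero_of_even_of_prime_dvd hD hp hp3 heven_add h
        (by nlinarith [sq_nonneg (t * t' + v * v' * D)]), mul_zero]
  have hvv : v = v' := by
    rw [hprod] at hzero
    have hp0 : (4 * (p : ℤ)) ≠ 0 := by have := hp.pos; positivity
    have := (mul_eq_zero.1 hzero).resolve_left hp0
    exact (pow_left_inj₀ hv.le hv'.le two_ne_zero).1 (by linarith)
  subst hvv
  exact ⟨(pow_left_inj₀ ht.le ht'.le two_ne_zero).1 (by linarith), rfl⟩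
end

section
/- Let p₁,…,p_n be pairwise distinct primes, let M = ∏_{i=1}^n p_i, and let M_i = M/p_i. For each i let a_i be the integer with 0 ≤ a_i < p_i and a_i·M_i ≡ 1 (mod p_i). Let c be an integer with 4·|c| < M, and for each i let c_i be the integer with 0 ≤ c_i < p_i and c_i ≡ c (mod p_i). Then the real number s = ∑_{i=1}^n c_i·a_i/p_i lies within distance 1/4 of a unique nearest integer r, and c = ∑_{i=1}^n c_i·a_i·M_i − r·M. In particular, for any positive integer P, c ≡ ∑ c_i·a_i·M_i − r·M (mod P). -/
/-!
Put `S = ∑ cᵢ aᵢ Mᵢ`. Modulo `pⱼ` every term of `S` with `i ≠ j` vanishes, since `pⱼ ∣ Mᵢ`, and the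
remaining term is `cⱼ aⱼ Mⱼ ≡ c`. The `pⱼ` being pairwise coprime, `S = c + k M` for an integer `k`.
Dividing by `M` gives `s = S / M = k + c / M`, and `|c / M| < 1 / 4`. So `k` lies within `1 / 4` of `s`,
and it is the only such integer because two of them would differ by less than `1 / 2`.
-/

/-- Explicit Chinese Remainder Theorem: with distinct primes pᵢ, M = ∏ pᵢ,
Mᵢ = M/pᵢ, aᵢ ≡ Mᵢ⁻¹ (mod pᵢ), an integer c with 4|c| < M, and residues
cᵢ ≡ c (mod pᵢ), the real number s = ∑ cᵢaᵢ/pᵢ is within 1/4 of a unique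
nearest integer r, and c = ∑ cᵢaᵢMᵢ − rM; in particular
c ≡ ∑ cᵢaᵢMᵢ − rM (mod P) for every positive integer P. -/
theorem explicit_crt
    {n : ℕ} (p : Fin n → ℕ) (hp : ∀ i, (p i).Prime)
    (hdist : Function.Injective p)
    (M : ℕ) (hM : M = ∏ i, p i)
    (Mi : Fin n → ℕ) (hMi : ∀ i, Mi i = M / p i)
    (a : Fin n → ℕ) (ha : ∀ i, a i < p i)
    (ha1 : ∀ i, a i * Mi i ≡ 1 [MOD p i])
    (c : ℤ) (hc : 4 * |c| < (M : ℤ))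
    (ci : Fin n → ℕ) (hci : ∀ i, ci i < p i)
    (hcc : ∀ i, (ci i : ℤ) ≡ c [ZMOD (p i : ℤ)])
    (s : ℝ) (hs : s = ∑ i, (ci i : ℝ) * (a i : ℝ) / (p i : ℝ)) :
    (∃! r : ℤ, |s - (r : ℝ)| < 1 / 4) ∧
    ∀ r : ℤ, |s - (r : ℝ)| < 1 / 4 →
      c = (∑ i, (ci i : ℤ) * (a i : ℤ) * (Mi i : ℤ)) - r * (M : ℤ) ∧
      ∀ P : ℕ, 0 < P →
        c ≡ (∑ i, (ci i : ℤ) * (a i : ℤ) * (Mi i : ℤ)) - r * (M : ℤ) [ZMOD (P : ℤ)] := by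
  have hp0 : ∀ i, (p i : ℝ) ≠ 0 := fun i => by exact_mod_cast (hp i).ne_zero
  have hMpos : 0 < M := by
    rw [hM]
    exact Finset.prod_pos fun i _ => (hp i).pos
  have hMR : (0 : ℝ) < M := by exact_mod_cast hMpos
  have hpM : ∀ i, p i ∣ M := fun i => hM ▸ Finset.dvd_prod_of_mem p (Finset.mem_univ i)
  have hMul : ∀ i, Mi i * p i = M := fun i => by
    rw [hMi]
    exact Nat.div_mul_cancel (hpM i)
  have hcop : ∀ i j, i ≠ j → Nat.Coprime (p i) (p j) := fun i j hij =>
    (Nat.coprime_primes (hp i) (hp j)).2 (hdist.ne hij)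
  have hdvd : ∀ i j, i ≠ j → p j ∣ Mi i := fun i j hij =>
    (hcop j i hij.symm).dvd_of_dvd_mul_right ((hMul i).symm ▸ hpM j)
  set S : ℤ := ∑ i, (ci i : ℤ) * (a i : ℤ) * (Mi i : ℤ) with hS
  have hSj : ∀ j, (p j : ℤ) ∣ S - c := by
    intro j
    have h1 : (p j : ℤ) ∣ S - (ci j : ℤ) * (a j : ℤ) * (Mi j : ℤ) := by
      rw [hS, ← Finset.add_sum_erase _ _ (Finset.mem_univ j), add_sub_cancel_left]
      refine Finset.dvd_sum fun i hi => Dvd.dvd.mul_left ?_ _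
      exact_mod_cast hdvd i j (Finset.ne_of_mem_erase hi)
    have h2 : (a j : ℤ) * (Mi j : ℤ) ≡ 1 [ZMOD (p j : ℤ)] := by
      exact_mod_cast (Int.natCast_modEq_iff.2 (ha1 j))
    have h3 := ((hcc j).mul h2).symm.dvd
    have h4 := dvd_add h1 h3
    rwa [show S - (ci j : ℤ) * a j * Mi j + ((ci j : ℤ) * (a j * Mi j) - c * 1) = S - c by ring]
      at h4
  have hMS : (M : ℤ) ∣ S - c := by
    rw [hM, Nat.cast_prod]
    exact Fintype.prod_dvd_of_coprime
      (fun i j hij => Nat.isCoprime_iff_coprime.2 (hcop i j hij)) hSj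
  obtain ⟨k, hk⟩ := hMS
  have hsM : s * M = S := by
    rw [hs, hS, Finset.sum_mul]
    push_cast
    refine Finset.sum_congr rfl fun i _ => ?_
    rw [← hMul i]
    push_cast
    field_simp [hp0 i]
  have hsk : s - k = c / M := by
    have hkR : (S : ℝ) - c = M * k := by exact_mod_cast hk
    rw [eq_div_iff hMR.ne']
    linarith
  have hnear : |s - (k : ℝ)| < 1 / 4 := by
    have hcR : 4 * |(c : ℝ)| < M := by exact_mod_cast hc
    rw [hsk, abs_div, abs_of_pos hMR, div_lt_iff₀ hMR]
    linarith
  have huniq : ∀ r : ℤ, |s - (r : ℝ)| < 1 / 4 → r = k := by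
    intro r hr
    rw [abs_lt] at hr hnear
    have h1 : (r : ℝ) < k + 1 := by linarith
    have h2 : (k : ℝ) < r + 1 := by linarith
    have h1' : r < k + 1 := by exact_mod_cast h1
    have h2' : k < r + 1 := by exact_mod_cast h2
    omega
  refine ⟨⟨k, hnear, huniq⟩, fun r hr => ?_⟩
  obtain rfl := huniq r hr
  have hceq : c = S - r * (M : ℤ) := by linarith
  exact ⟨hceq, fun P _ => congrArg (· % (P : ℤ)) hceq⟩
end

section
/- Let n be a positive integer, let t₁,…,t_n be real numbers, and let q be an integer such that |∑_{i=1}^n t_i − q| < 1/4. Let δ be a positive integer with 2^δ ≥ 4n, and for each i set s_i = ⌊2^δ·t_i⌋. Then ⌊3/4 + 2^{−δ}·∑_{i=1}^n s_i⌋ = q. (This justifies recovering the explicit-CRT rounding term r from fixed-point approximations s_i of the terms c_i·a_i/p_i, each accurate to within 1/(4n).) -/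
/-! Truncation only loses: `2^δ tᵢ - 1 ≤ sᵢ ≤ 2^δ tᵢ`, so summing and dividing by `2^δ ≥ 4n` gives
`∑ tᵢ - 1/4 ≤ 2^{-δ} ∑ sᵢ ≤ ∑ tᵢ`. As `∑ tᵢ` is within `1/4` of `q`, the scaled sum lies in
`(q - 1/2, q + 1/4)`, and adding `3/4` moves it into `(q + 1/4, q + 1)`, where the floor is `q`. -/

/-- Recovering the explicit-CRT rounding term from fixed-point approximations:
if |∑ tᵢ − q| < 1/4, 2^δ ≥ 4n and sᵢ = ⌊2^δ·tᵢ⌋, then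
⌊3/4 + 2^{−δ}·∑ sᵢ⌋ = q. -/
theorem crt_rounding_recovery
    (n : ℕ) (hn : 0 < n) (t : Fin n → ℝ) (q : ℤ)
    (hq : |(∑ i, t i) - (q : ℝ)| < 1 / 4)
    (δ : ℕ) (hδ : 0 < δ) (hδn : 4 * n ≤ 2 ^ δ)
    (s : Fin n → ℤ) (hs : ∀ i, s i = ⌊(2 : ℝ) ^ δ * t i⌋) :
    ⌊(3 : ℝ) / 4 + (2 : ℝ) ^ (-(δ : ℤ)) * ∑ i, (s i : ℝ)⌋ = q := by
  have hP : (0 : ℝ) < 2 ^ δ := by positivity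
  have hn4 : 4 * (n : ℝ) ≤ 2 ^ δ := by exact_mod_cast hδn
  have hup : ∑ i, (s i : ℝ) ≤ 2 ^ δ * ∑ i, t i := by
    rw [Finset.mul_sum]
    refine Finset.sum_le_sum fun i _ => ?_
    rw [hs i]
    exact Int.floor_le _
  have hlow : 2 ^ δ * ∑ i, t i - n ≤ ∑ i, (s i : ℝ) := by
    have h : ∑ i, (2 ^ δ * t i - 1) ≤ ∑ i, (s i : ℝ) := by
      refine Finset.sum_le_sum fun i _ => ?_
      rw [hs i]
      exact (Int.sub_one_lt_floor _).le
    simpa [Finset.sum_sub_distrib, ← Finset.mul_sum] using h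
  have hup' : (∑ i, (s i : ℝ)) / 2 ^ δ ≤ ∑ i, t i := by
    rw [div_le_iff₀ hP]
    linarith
  have hlow' : ∑ i, t i - 1 / 4 ≤ (∑ i, (s i : ℝ)) / 2 ^ δ := by
    rw [le_div_iff₀ hP]
    linarith
  obtain ⟨h1, h2⟩ := abs_lt.mp hq
  rw [zpow_neg, zpow_natCast, inv_mul_eq_div, Int.floor_eq_iff]
  constructor <;> linarith
end
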